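/- arXiv:1502.03085 — 2 statements merged into one kernel-verified Lean document; each statement's English description precedes it below -/
import Mathlib

section
/- Let m be a positive integer such that p = 2m+1 is prime. Then for every integer r and every j with 1 ≤ j ≤ m, the real number p^{⌊(r−1)/m⌋} · 𝓕_r^{(m,j)} is an integer; that is, there exists z ∈ ℤ with p^{⌊(r−1)/m⌋} · Σ_{t=1}^{m} μ_{m,t}^{−r}·(φ_{m,jt} − φ_{m,(j−1)t}) = z, where ⌊·⌋ denotes the floor of the rational number (r−1)/m and the power of p is an integer power (possibly negative). -/
open Real Finset Filter

/-- `φ_{m,k} = 2·cos(2πk/(2m+1))`. -/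
noncomputable def phiF (m : ℕ) (k : ℤ) : ℝ := 2 * Real.cos (2 * Real.pi * k / (2 * m + 1))

/-- `μ_{m,k} = φ_{m,k} − 2`. -/
noncomputable def muF (m : ℕ) (k : ℤ) : ℝ := phiF m k - 2

/-- The `m`-dimensional interlacing Fibonacci sequence
`𝓕_r^{(m,j)} = Σ_{t=1}^{m} μ_{m,t}^{−r}·(φ_{m,jt} − φ_{m,(j−1)t})`. -/
noncomputable def Fcal (m : ℕ) (r : ℤ) (j : ℤ) : ℝ :=
  ∑ t ∈ Finset.Icc 1 m, (muF m t) ^ (-r) * (phiF m (j * t) - phiF m ((j - 1) * t))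

/-- The companion sequence
`𝓖_r^{(m,j)} = Σ_{t=1}^{m} μ_{m,t}^{−r}·(φ_{m,(j+1)t} − 2φ_{m,jt} + φ_{m,(j−1)t})`. -/
noncomputable def Gcal (m : ℕ) (r : ℤ) (j : ℤ) : ℝ :=
  ∑ t ∈ Finset.Icc 1 m,
    (muF m t) ^ (-r) * (phiF m ((j + 1) * t) - 2 * phiF m (j * t) + phiF m ((j - 1) * t))

/-- A fixed primitive `(2m+1)`-st root of unity. -/
noncomputable def zetaF (m : ℕ) : ℂ := Complex.exp (2 * Real.pi * Complex.I / ((2 * m + 1 : ℕ) : ℂ))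

lemma zetaF_prim (m : ℕ) : IsPrimitiveRoot (zetaF m) (2 * m + 1) :=
  Complex.isPrimitiveRoot_exp (2 * m + 1) (by omega)

lemma zetaF_ne (m : ℕ) : zetaF m ≠ 0 := Complex.exp_ne_zero _

lemma phiF_complex (m : ℕ) (k : ℤ) : ((phiF m k : ℝ) : ℂ) = zetaF m ^ k + (zetaF m ^ k)⁻¹ := by
  unfold phiF zetaF
  rw [← Complex.exp_int_mul, ← Complex.exp_neg]
  push_cast
  rw [Complex.two_cos]
  congr 2 <;> ring

lemma phiF_mul (m : ℕ) (a b : ℤ) : phiF m a * phiF m b = phiF m (a + b) + phiF m (a - b) := by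
  have h := zetaF_ne m
  apply Complex.ofReal_injective
  push_cast
  simp only [phiF_complex, zpow_add₀ h, zpow_sub₀ h]
  have ha : zetaF m ^ a ≠ 0 := zpow_ne_zero _ h
  have hb : zetaF m ^ b ≠ 0 := zpow_ne_zero _ h
  field_simp
  ring

lemma zetaF_zpow_one (m : ℕ) (k : ℤ) (h : ((2 * m + 1 : ℕ) : ℤ) ∣ k) : zetaF m ^ k = 1 :=
  ((zetaF_prim m).zpow_eq_one_iff_dvd k).2 h

lemma phiF_congr (m : ℕ) (a b : ℤ) (h : ((2 * m + 1 : ℕ) : ℤ) ∣ a - b) : phiF m a = phiF m b := by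
  apply Complex.ofReal_injective
  have : zetaF m ^ a = zetaF m ^ b := by
    have h1 := zetaF_zpow_one m _ h
    have : a = (a - b) + b := by ring
    rw [this, zpow_add₀ (zetaF_ne m), h1, one_mul]
  simp only [phiF_complex, this]

lemma phiF_zero (m : ℕ) : phiF m 0 = 2 := by simp [phiF]

lemma prim_k (m : ℕ) (hp : Nat.Prime (2 * m + 1)) (k : ℤ) (h : ¬ ((2 * m + 1 : ℕ) : ℤ) ∣ k) :
    IsPrimitiveRoot (zetaF m ^ k) (2 * m + 1) := by
  apply (zetaF_prim m).zpow_of_gcd_eq_one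
  have := (Int.isCoprime_iff_gcd_eq_one.1
    ((Prime.coprime_iff_not_dvd (Nat.prime_iff_prime_int.1 hp)).2 h))
  rwa [Int.gcd_comm]

lemma inv_pow_eq (m : ℕ) (z : ℂ) (hz : z ^ (2 * m + 1) = 1) (i : ℕ) (hi : i < m) :
    (z ^ (i + 1))⁻¹ = z ^ (m + (m - 1 - i) + 1) := by
  symm
  apply eq_inv_of_mul_eq_one_left
  rw [← pow_add, ← hz]
  congr 1
  omega

lemma sum_mu (m : ℕ) (hp : Nat.Prime (2 * m + 1)) (k : ℤ) :
    ∃ z : ℤ, ∑ t ∈ Finset.Icc 1 m, muF m (k * t) = (2 * m + 1 : ℝ) * z := by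
  by_cases h : ((2 * m + 1 : ℕ) : ℤ) ∣ k
  · refine ⟨0, ?_⟩
    simp only [Int.cast_zero, mul_zero]
    apply Finset.sum_eq_zero
    intro t _
    unfold muF
    rw [phiF_congr m (k * t) 0 (by simpa using h.mul_right _), phiF_zero, sub_self]
  · refine ⟨-1, ?_⟩
    have hz := prim_k m hp k h
    set z := zetaF m ^ k with hzdef
    have h1 : ∑ i ∈ Finset.range (2 * m + 1), z ^ i = 0 := hz.geom_sum_eq_zero hp.one_lt
    rw [Finset.sum_range_succ', two_mul, Finset.sum_range_add,
      ← Finset.sum_range_reflect (fun x => z ^ (m + x + 1)), ← Finset.sum_add_distrib] at h1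
    apply Complex.ofReal_injective
    rw [← Finset.Ico_succ_right_eq_Icc, Finset.sum_Ico_eq_sum_range]
    push_cast
    have h2 : ∀ i ∈ Finset.range m, ((muF m (k * ((1 + i : ℕ) : ℤ)) : ℝ) : ℂ)
        = (z ^ (i + 1) + z ^ (m + (m - 1 - i) + 1)) - 2 := by
      intro i hi
      rw [← inv_pow_eq m z hz.pow_eq_one i (Finset.mem_range.1 hi)]
      unfold muF
      push_cast
      rw [phiF_complex, zpow_mul, ← hzdef, add_comm (1 : ℤ)]
      norm_cast
    have h3 : Order.succ m - 1 = m := by simp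
    rw [h3]
    push_cast at h2
    rw [Finset.sum_congr rfl h2, Finset.sum_sub_distrib]

    simp only [pow_zero] at h1
    rw [eq_neg_of_add_eq_zero_left h1]
    simp
    ring

lemma prod_mu (m : ℕ) (hp : Nat.Prime (2 * m + 1)) (k : ℤ) (h : ¬ ((2 * m + 1 : ℕ) : ℤ) ∣ k) :
    ∏ t ∈ Finset.Icc 1 m, muF m (k * t) = (-1) ^ m * (2 * m + 1 : ℝ) := by
  have hz := prim_k m hp k h
  set z := zetaF m ^ k with hzdef
  have h1 := hz.prod_one_sub_pow_eq_order
  rw [two_mul, Finset.prod_range_add,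
    ← Finset.prod_range_reflect (fun x => (1 - z ^ (m + x + 1))), ← Finset.prod_mul_distrib] at h1
  apply Complex.ofReal_injective
  rw [← Finset.Ico_succ_right_eq_Icc, Finset.prod_Ico_eq_prod_range]
  push_cast
  have h2 : ∀ i ∈ Finset.range m, ((muF m (k * ((1 + i : ℕ) : ℤ)) : ℝ) : ℂ)
      = (-1) * ((1 - z ^ (i + 1)) * (1 - z ^ (m + (m - 1 - i) + 1))) := by
    intro i hi
    rw [← inv_pow_eq m z hz.pow_eq_one i (Finset.mem_range.1 hi)]
    unfold muF
    push_cast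
    rw [phiF_complex, zpow_mul, ← hzdef, add_comm (1 : ℤ)]
    have hz0 : z ^ (i + 1) ≠ 0 := pow_ne_zero _ (zpow_ne_zero _ (zetaF_ne m))
    have : z ^ ((i : ℤ) + 1) = z ^ (i + 1) := by norm_cast
    rw [this]
    field_simp
    ring
  have h3 : Order.succ m - 1 = m := by simp
  rw [h3]
  push_cast at h2
  rw [Finset.prod_congr rfl h2, Finset.prod_mul_distrib, h1]
  simp
  ring

/-- The ring of functions `s ↦ g(φ_s)` generated by `s ↦ φ_{ks}`. -/
noncomputable def ringF (m : ℕ) : Subring (ℤ → ℝ) :=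
  Subring.closure (Set.range fun (k : ℤ) (s : ℤ) => phiF m (k * s))

lemma phi_mem (m : ℕ) (k : ℤ) : (fun s : ℤ => phiF m (k * s)) ∈ ringF m :=
  Subring.subset_closure ⟨k, rfl⟩

lemma mu_mem (m : ℕ) (k : ℤ) : (fun s : ℤ => muF m (k * s)) ∈ ringF m := by
  have := (ringF m).sub_mem (phi_mem m k) (ofNat_mem (ringF m) 2)
  exact this

/-- trace divisibility predicate -/
def TrF (m : ℕ) (g : ℤ → ℝ) : Prop :=
  ∀ k : ℤ, ∃ z : ℤ, ∑ t ∈ Finset.Icc 1 m, muF m (k * t) * g t = (2 * m + 1 : ℝ) * z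

lemma TrF_add (m : ℕ) (f g : ℤ → ℝ) (hf : TrF m f) (hg : TrF m g) : TrF m (f + g) := by
  intro k
  obtain ⟨a, ha⟩ := hf k
  obtain ⟨b, hb⟩ := hg k
  refine ⟨a + b, ?_⟩
  simp only [Pi.add_apply, mul_add, Finset.sum_add_distrib, ha, hb]
  push_cast
  ring

lemma TrF_of_mem (m : ℕ) (hp : Nat.Prime (2 * m + 1)) (f : ℤ → ℝ) (hf : f ∈ ringF m) :
    TrF m f := by
  have key : ∀ g, TrF m g → TrF m (f * g) := by
    induction hf using Subring.closure_induction with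
    | mem x hx =>
      obtain ⟨a, rfl⟩ := hx
      intro g hg k
      obtain ⟨u, hu⟩ := hg (k + a)
      obtain ⟨v, hv⟩ := hg (k - a)
      obtain ⟨w, hw⟩ := hg a
      refine ⟨u + v - 2 * w, ?_⟩
      have : (2 * m + 1 : ℝ) * ((u + v - 2 * w : ℤ) : ℝ) = (2 * m + 1 : ℝ) * u +
        (2 * m + 1 : ℝ) * v - 2 * ((2 * m + 1 : ℝ) * w) := by push_cast; ring
      rw [this, ← hu, ← hv, ← hw, Finset.mul_sum, ← Finset.sum_add_distrib,
        ← Finset.sum_sub_distrib]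
      apply Finset.sum_congr rfl
      intro t _
      have h := phiF_mul m (k * t) (a * t)
      simp only [Pi.mul_apply, muF, add_mul, sub_mul] at *
      linear_combination g t * h
    | zero =>
      intro g hg k
      exact ⟨0, by simp⟩
    | one => intro g hg; simpa using hg
    | add x y _ _ hx hy =>
      intro g hg
      rw [add_mul]
      exact TrF_add m _ _ (hx g hg) (hy g hg)
    | neg x _ hx =>
      intro g hg k
      obtain ⟨a, ha⟩ := hx g hg k
      refine ⟨-a, ?_⟩
      push_cast
      rw [mul_neg, ← ha, ← Finset.sum_neg_distrib]
      apply Finset.sum_congr rfl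
      intro t _
      simp
    | mul x y _ _ hx hy =>
      intro g hg
      rw [mul_assoc]
      exact hx _ (hy g hg)
  have := key 1 (fun k => by simpa using sum_mu m hp k)
  simpa using this

lemma quot (m : ℕ) (a : ℤ) (k : ℕ) :
    ∃ q ∈ ringF m, ∀ s, muF m (k * (a * s)) = muF m (a * s) * q s := by
  induction k using Nat.twoStepInduction with
  | zero => exact ⟨0, zero_mem _, fun s => by simp [muF, phiF_zero]⟩
  | one => exact ⟨1, one_mem _, fun s => by simp⟩
  | more k h0 h1 =>
    obtain ⟨q0, hq0, h0⟩ := h0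
    obtain ⟨q1, hq1, h1⟩ := h1
    refine ⟨(fun s : ℤ => muF m (((k + 1 : ℕ) : ℤ) * a * s)) + 2 + 2 * q1 - q0, ?_, ?_⟩
    · exact sub_mem (add_mem (add_mem (mu_mem m _) (ofNat_mem _ 2))
        (mul_mem (ofNat_mem _ 2) hq1)) hq0
    · intro s
      have h := phiF_mul m (((k + 1 : ℕ) : ℤ) * (a * s)) (a * s)
      have e1 : ((k + 1 : ℕ) : ℤ) * (a * s) + a * s = ((k + 2 : ℕ) : ℤ) * (a * s) := by
        push_cast; ring
      have e2 : ((k + 1 : ℕ) : ℤ) * (a * s) - a * s = (k : ℤ) * (a * s) := by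
        push_cast; ring
      rw [e1, e2] at h
      have h0 := h0 s
      have h1 := h1 s
      simp only [Pi.add_apply, Pi.sub_apply, Pi.mul_apply, Pi.ofNat_apply, mul_assoc]
      simp only [muF] at *
      linear_combination -h + 2 * h1 - h0

lemma not_dvd_of_mem (m : ℕ) (t : ℕ) (ht : t ∈ Finset.Icc 1 m) :
    ¬ ((2 * m + 1 : ℕ) : ℤ) ∣ (t : ℤ) := by
  rw [Finset.mem_Icc] at ht
  intro h
  have := Nat.le_of_dvd (by omega) (Int.natCast_dvd_natCast.1 h)
  omega

lemma exists_U (m : ℕ) (hp : Nat.Prime (2 * m + 1)) :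
    ∃ U ∈ ringF m, ∀ s ∈ Finset.Icc 1 m, muF m (s : ℤ) ^ m * U s = (2 * m + 1 : ℝ) := by
  choose q hq hq' using fun t : ℕ => quot m 1 t
  refine ⟨(-1) ^ m * ∏ t ∈ Finset.Icc 1 m, q t,
    mul_mem (pow_mem (neg_mem (one_mem _)) _) (prod_mem fun t _ => hq t), ?_⟩
  intro s hs
  have h := prod_mu m hp s (not_dvd_of_mem m s hs)
  have h2 : ∏ t ∈ Finset.Icc 1 m, muF m (s * t) = muF m s ^ m * ∏ t ∈ Finset.Icc 1 m, q t s := by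
    have : ∀ t ∈ Finset.Icc 1 m, muF m (s * t) = muF m s * q t s := by
      intro t _
      have := hq' t s
      simp only [one_mul] at this
      rw [← this, mul_comm]
    rw [Finset.prod_congr rfl this, Finset.prod_mul_distrib]
    simp
  have e : ((-1 : ℝ) ^ m) * (-1) ^ m = 1 := by rw [← mul_pow]; simp
  simp only [Pi.mul_apply, Pi.pow_apply, Pi.neg_apply, Pi.one_apply, Finset.prod_apply]
  rw [mul_left_comm, ← h2, h, ← mul_assoc, e, one_mul]

lemma exists_V (m : ℕ) (hp : Nat.Prime (2 * m + 1)) :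
    ∃ V ∈ ringF m, ∀ s ∈ Finset.Icc 1 m, muF m (s : ℤ) ^ m = (2 * m + 1 : ℝ) * V s := by
  have hinv : ∀ t : ℕ, ∃ t' : ℕ, t ∈ Finset.Icc 1 m →
      ((2 * m + 1 : ℕ) : ℤ) ∣ (t' : ℤ) * t - 1 := by
    intro t
    by_cases ht : t ∈ Finset.Icc 1 m
    · have : Nat.Coprime t (2 * m + 1) := by
        rw [Nat.coprime_comm, hp.coprime_iff_not_dvd]
        intro h
        exact not_dvd_of_mem m t ht (Int.natCast_dvd_natCast.2 h)
      obtain ⟨y, hy⟩ := Nat.exists_mul_mod_eq_one_of_coprime this hp.one_lt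
      refine ⟨y, fun _ => ?_⟩
      have h1 : (1 : ℕ) ≡ t * y [MOD (2 * m + 1)] := by
        unfold Nat.ModEq
        rw [hy.2, Nat.mod_eq_of_lt hp.one_lt]
      have := (Nat.modEq_iff_dvd).1 h1
      push_cast at this ⊢
      rwa [mul_comm (t : ℤ)] at this
    · exact ⟨0, fun h => absurd h ht⟩
  choose i hi using hinv
  choose q hq hq' using fun t : ℕ => quot m t (i t)
  refine ⟨(-1) ^ m * ∏ t ∈ Finset.Icc 1 m, q t,
    mul_mem (pow_mem (neg_mem (one_mem _)) _) (prod_mem fun t _ => hq t), ?_⟩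
  intro s hs
  have h := prod_mu m hp s (not_dvd_of_mem m s hs)
  have h2 : muF m s ^ m = ∏ t ∈ Finset.Icc 1 m, (muF m (s * t) * q t s) := by
    have : ∀ t ∈ Finset.Icc 1 m, muF m (s * t) * q t s = muF m s := by
      intro t ht
      rw [mul_comm (s : ℤ), ← hq' t s]
      unfold muF
      rw [phiF_congr m _ s]
      have := (hi t ht).mul_right (s : ℤ)
      rwa [sub_mul, one_mul, mul_assoc] at this
    rw [Finset.prod_congr rfl this]
    simp
  simp only [Pi.mul_apply, Pi.pow_apply, Pi.neg_apply, Pi.one_apply, Finset.prod_apply]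
  rw [h2, Finset.prod_mul_distrib, h]
  ring

lemma exists_W (m : ℕ) (hp : Nat.Prime (2 * m + 1)) (f : ℤ) :
    ∃ W ∈ ringF m, ∀ s ∈ Finset.Icc 1 m,
      (2 * m + 1 : ℝ) ^ f = (muF m (s : ℤ) ^ m) ^ f * W s := by
  have hP : (2 * m + 1 : ℝ) ≠ 0 := by positivity
  obtain ⟨U, hU, hU'⟩ := exists_U m hp
  obtain ⟨V, hV, hV'⟩ := exists_V m hp
  obtain ⟨n, rfl | rfl⟩ := f.eq_nat_or_neg
  · refine ⟨U ^ n, pow_mem hU n, fun s hs => ?_⟩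
    rw [← hU' s hs]
    simp [mul_pow]
  · refine ⟨V ^ n, pow_mem hV n, fun s hs => ?_⟩
    have h0 : muF m (s : ℤ) ^ m ≠ 0 := by
      intro h
      have := hU' s hs
      rw [h, zero_mul] at this
      exact hP this.symm
    have hV0 : V s ≠ 0 := by
      intro h
      have := hV' s hs
      rw [h, mul_zero] at this
      exact h0 this
    rw [hV' s hs]
    simp only [zpow_neg, zpow_natCast, mul_pow, Pi.pow_apply]
    field_simp

theorem stmt_13 (m : ℕ) (hm : 0 < m) (hp : Nat.Prime (2 * m + 1)) (r : ℤ) (j : ℕ)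
    (hj1 : 1 ≤ j) (hjm : j ≤ m) :
    ∃ z : ℤ,
      (2 * m + 1 : ℝ) ^ (⌊((r : ℚ) - 1) / (m : ℚ)⌋) *
        (∑ t ∈ Finset.Icc 1 m,
          (muF m t) ^ (-r) * (phiF m (j * t) - phiF m (((j : ℤ) - 1) * t))) = (z : ℝ) := by
  have hP : (2 * m + 1 : ℝ) ≠ 0 := by positivity
  have hfl := Int.floor_le (((r : ℚ) - 1) / (m : ℚ))
  have hfl' := Int.lt_floor_add_one (((r : ℚ) - 1) / (m : ℚ))
  set f := ⌊((r : ℚ) - 1) / (m : ℚ)⌋ with hf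
  have hmq : (0 : ℚ) < m := by exact_mod_cast hm
  have hlt : r - 1 < (f + 1) * m := by
    rw [div_lt_iff₀ hmq] at hfl'
    exact_mod_cast hfl'
  obtain ⟨d, hd⟩ : ∃ d : ℕ, (f + 1) * m - r = d := ⟨((f + 1) * m - r).toNat, by omega⟩
  obtain ⟨W, hW, hW'⟩ := exists_W m hp (f + 1)
  obtain ⟨q1, hq1, h1⟩ := quot m 1 j
  obtain ⟨q0, hq0, h0⟩ := quot m 1 (j - 1)
  have hg : (fun s : ℤ => muF m (1 * s)) ^ d * W * (q1 - q0) ∈ ringF m :=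
    mul_mem (mul_mem (pow_mem (mu_mem m 1) d) hW) (sub_mem hq1 hq0)
  obtain ⟨z, hz⟩ := TrF_of_mem m hp _ hg 1
  refine ⟨z, ?_⟩
  apply mul_left_cancel₀ hP
  rw [← hz, ← mul_assoc, ← zpow_one_add₀ hP, Finset.mul_sum]
  apply Finset.sum_congr rfl
  intro t ht
  have hmu : muF m (t : ℤ) ≠ 0 := by
    intro h
    obtain ⟨U, hU, hU'⟩ := exists_U m hp
    have := hU' t ht
    rw [h, zero_pow hm.ne', zero_mul] at this
    exact hP this.symm
  have h1 := h1 t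
  have h0 := h0 t
  rw [Nat.cast_sub hj1] at h0
  simp only [one_mul, Nat.cast_one] at h1 h0
  have hD : phiF m (j * t) - phiF m (((j : ℤ) - 1) * t) = muF m t * (q1 t - q0 t) := by
    rw [mul_sub, ← h1, ← h0]
    unfold muF
    ring
  rw [hD, add_comm 1 f, hW' t ht]
  have e : (muF m (t : ℤ) ^ m) ^ (f + 1) * muF m (t : ℤ) ^ (-r) = muF m (t : ℤ) ^ d := by
    rw [← zpow_natCast, ← zpow_mul, ← zpow_add₀ hmu, ← zpow_natCast, ← hd]
    congr 1
    ring
  simp only [Pi.mul_apply, Pi.pow_apply, Pi.sub_apply, one_mul]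
  rw [← e]
  ring
end

section
/- Let m be a positive integer and n = 2m+1. For every integer r: (i) Σ_{j=1}^{m} ( 𝓕_r^{(m,j)} )² = −n · Σ_{t=1}^{m} μ_{m,t}^{1−2r} = −n·𝓕_{2r}^{(m,1)}; and (ii) 4·( Σ_{t=1}^{m} μ_{m,t}^{1−r} )² + 2·Σ_{j=1}^{m} ( 𝓖_r^{(m,j)} )² = 2n · Σ_{t=1}^{m} μ_{m,t}^{2−2r}. -/
open Real Finset Filter

theorem aux_tel1 (θ : ℝ) (M : ℕ) :
    2 * Real.sin θ * ∑ j ∈ Finset.Icc 1 M, Real.cos ((2 * j - 1) * θ) = Real.sin (2 * M * θ) := by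
  induction M with
  | zero => simp
  | succ k ih =>
    rw [Finset.sum_Icc_succ_top (by omega), mul_add, ih]
    push_cast
    have h1 : 2 * (k : ℝ) * θ = (2 * (k + 1) - 1) * θ - θ := by ring
    have h2 : 2 * ((k : ℝ) + 1) * θ = (2 * (k + 1) - 1) * θ + θ := by ring
    rw [h1, h2, Real.sin_add, Real.sin_sub]
    ring

theorem aux_tel2 (θ : ℝ) (M : ℕ) :
    2 * Real.sin θ * ∑ j ∈ Finset.Icc 1 M, Real.cos (2 * j * θ)
      = Real.sin ((2 * M + 1) * θ) - Real.sin θ := by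
  induction M with
  | zero => simp
  | succ k ih =>
    rw [Finset.sum_Icc_succ_top (by omega), mul_add, ih]
    push_cast
    have h1 : (2 * (k : ℝ) + 1) * θ = 2 * (k + 1) * θ - θ := by ring
    have h2 : (2 * ((k : ℝ) + 1) + 1) * θ = 2 * (k + 1) * θ + θ := by ring
    rw [h1, h2, Real.sin_add, Real.sin_sub]
    ring

theorem aux_sin_ne (m : ℕ) (k : ℤ) (h0 : k ≠ 0) (h1 : |k| < 2 * m + 1) :
    Real.sin (Real.pi * k / (2 * m + 1)) ≠ 0 := by
  rw [Ne, Real.sin_eq_zero_iff]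
  rintro ⟨l, hl⟩
  have hn : (2 * (m : ℝ) + 1) ≠ 0 := by positivity
  rw [eq_div_iff hn] at hl
  have h2 : ((l * (2 * m + 1) : ℤ) : ℝ) = (k : ℤ) := by
    push_cast
    apply mul_left_cancel₀ Real.pi_ne_zero
    linarith
  have h3 : l * (2 * m + 1) = k := by exact_mod_cast h2
  exact h0 (Int.eq_zero_of_abs_lt_dvd ⟨l, by rw [← h3]; ring⟩ h1)

theorem aux_D (m : ℕ) (k : ℤ) (h0 : k ≠ 0) (h1 : |k| < 2 * m + 1) :
    ∑ j ∈ Finset.Icc 1 m, Real.cos ((2 * j - 1) * (Real.pi * k / (2 * m + 1)))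
      = -(-1) ^ k / 2 := by
  have hs := aux_sin_ne m k h0 h1
  have ht := aux_tel1 (Real.pi * k / (2 * m + 1)) m
  have hn : (2 * (m : ℝ) + 1) ≠ 0 := by positivity
  have : 2 * (m : ℝ) * (Real.pi * k / (2 * m + 1))
      = k * Real.pi - Real.pi * k / (2 * m + 1) := by
    field_simp; ring
  rw [this, Real.sin_sub, Real.sin_int_mul_pi, Real.cos_int_mul_pi] at ht
  apply mul_left_cancel₀ hs
  linarith

theorem aux_C (m : ℕ) (k : ℤ) (h0 : k ≠ 0) (h1 : |k| < 2 * m + 1) :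
    ∑ j ∈ Finset.Icc 1 m, Real.cos (2 * j * (Real.pi * k / (2 * m + 1))) = -1 / 2 := by
  have hs := aux_sin_ne m k h0 h1
  have ht := aux_tel2 (Real.pi * k / (2 * m + 1)) m
  have hn : (2 * (m : ℝ) + 1) ≠ 0 := by positivity
  have : (2 * (m : ℝ) + 1) * (Real.pi * k / (2 * m + 1)) = k * Real.pi := by
    field_simp
  rw [this, Real.sin_int_mul_pi] at ht
  apply mul_left_cancel₀ hs
  linarith

theorem aux_phi_mul (m : ℕ) (j s t : ℤ) :
    phiF m (j * s) * phiF m (j * t)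
      = 2 * Real.cos (2 * j * (Real.pi * (s + t : ℤ) / (2 * m + 1)))
        + 2 * Real.cos (2 * j * (Real.pi * (s - t : ℤ) / (2 * m + 1))) := by
  unfold phiF
  have h1 : 2 * (j : ℝ) * (Real.pi * (s + t : ℤ) / (2 * m + 1))
    = 2 * Real.pi * (j * s : ℤ) / (2 * m + 1) + 2 * Real.pi * (j * t : ℤ) / (2 * m + 1) := by
    push_cast; ring
  have h2 : 2 * (j : ℝ) * (Real.pi * (s - t : ℤ) / (2 * m + 1))
    = 2 * Real.pi * (j * s : ℤ) / (2 * m + 1) - 2 * Real.pi * (j * t : ℤ) / (2 * m + 1) := by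
    push_cast; ring
  rw [h1, h2, Real.cos_add, Real.cos_sub]
  ring

theorem aux_phi_sub (m : ℕ) (j t : ℤ) :
    phiF m (j * t) - phiF m ((j - 1) * t)
      = -4 * Real.sin ((2 * j - 1) * (Real.pi * t / (2 * m + 1)))
          * Real.sin (Real.pi * t / (2 * m + 1)) := by
  unfold phiF
  have h1 : 2 * Real.pi * (j * t : ℤ) / (2 * m + 1)
    = (2 * j - 1) * (Real.pi * t / (2 * m + 1)) + Real.pi * t / (2 * m + 1) := by
    push_cast; ring
  have h2 : 2 * Real.pi * ((j - 1) * t : ℤ) / (2 * m + 1)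
    = (2 * j - 1) * (Real.pi * t / (2 * m + 1)) - Real.pi * t / (2 * m + 1) := by
    push_cast; ring
  rw [h1, h2, Real.cos_add, Real.cos_sub]
  ring

theorem aux_mu (m : ℕ) (t : ℤ) : muF m t = -4 * Real.sin (Real.pi * t / (2 * m + 1)) ^ 2 := by
  unfold muF phiF
  have h1 : 2 * Real.pi * t / (2 * m + 1) = 2 * (Real.pi * t / (2 * m + 1)) := by ring
  rw [h1, Real.cos_two_mul, Real.cos_sq']
  ring

theorem aux_phi_second (m : ℕ) (j t : ℤ) :
    phiF m ((j + 1) * t) - 2 * phiF m (j * t) + phiF m ((j - 1) * t)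
      = muF m t * phiF m (j * t) := by
  unfold muF phiF
  have h1 : 2 * Real.pi * ((j + 1) * t : ℤ) / (2 * m + 1)
    = 2 * Real.pi * (j * t : ℤ) / (2 * m + 1) + 2 * Real.pi * t / (2 * m + 1) := by
    push_cast; ring
  have h2 : 2 * Real.pi * ((j - 1) * t : ℤ) / (2 * m + 1)
    = 2 * Real.pi * (j * t : ℤ) / (2 * m + 1) - 2 * Real.pi * t / (2 * m + 1) := by
    push_cast; ring
  rw [h1, h2, Real.cos_add, Real.cos_sub]
  ring

theorem aux_quad (S : Finset ℕ) (a c : ℕ → ℝ) (d : ℝ) (f : ℕ → ℕ → ℝ)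
    (h : ∀ s ∈ S, ∀ t ∈ S, ∑ j ∈ S, f j s * f j t = (if s = t then c s else 0) + d) :
    ∑ j ∈ S, (∑ t ∈ S, a t * f j t) ^ 2
      = ∑ t ∈ S, a t ^ 2 * c t + d * (∑ t ∈ S, a t) ^ 2 := by
  have h1 : ∑ j ∈ S, (∑ t ∈ S, a t * f j t) ^ 2
      = ∑ s ∈ S, ∑ t ∈ S, a s * a t * ∑ j ∈ S, f j s * f j t := by
    simp_rw [sq, Finset.sum_mul_sum, Finset.mul_sum]
    rw [Finset.sum_comm]
    refine Finset.sum_congr rfl fun s _ => ?_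
    rw [Finset.sum_comm]
    refine Finset.sum_congr rfl fun t _ => Finset.sum_congr rfl fun j _ => ?_
    ring
  rw [h1, sq, Finset.sum_mul_sum, Finset.mul_sum, ← Finset.sum_add_distrib]
  refine Finset.sum_congr rfl fun s hs => ?_
  rw [Finset.mul_sum]
  have h2 : a s ^ 2 * c s = ∑ t ∈ S, if s = t then a s * a t * c s else 0 := by
    rw [Finset.sum_ite_eq, if_pos hs]; ring
  rw [h2, ← Finset.sum_add_distrib]
  refine Finset.sum_congr rfl fun t ht => ?_
  rw [h s hs t ht]
  split_ifs <;> ring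

theorem aux_orth_G (m s t : ℕ) (hs : s ∈ Finset.Icc 1 m) (ht : t ∈ Finset.Icc 1 m) :
    ∑ j ∈ Finset.Icc 1 m, phiF m ((j : ℤ) * s) * phiF m ((j : ℤ) * t)
      = (if s = t then (2 * m + 1 : ℝ) else 0) + (-2) := by
  rw [Finset.mem_Icc] at hs ht
  simp_rw [aux_phi_mul]
  rw [Finset.sum_add_distrib, ← Finset.mul_sum, ← Finset.mul_sum]
  have h1 := aux_C m (s + t) (by omega) (by rw [abs_lt]; omega)
  simp only [Int.cast_natCast]
  rw [h1]
  split_ifs with h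
  · subst h
    simp
    ring
  · rw [aux_C m (s - t) (by omega) (by rw [abs_lt]; omega)]
    norm_num

theorem aux_orth_F (m s t : ℕ) (hs : s ∈ Finset.Icc 1 m) (ht : t ∈ Finset.Icc 1 m) :
    ∑ j ∈ Finset.Icc 1 m, (phiF m ((j : ℤ) * s) - phiF m (((j : ℤ) - 1) * s))
        * (phiF m ((j : ℤ) * t) - phiF m (((j : ℤ) - 1) * t))
      = (if s = t then -(2 * m + 1 : ℝ) * muF m s else 0) + 0 := by
  rw [Finset.mem_Icc] at hs ht
  have key : ∀ j : ℕ, (phiF m ((j : ℤ) * s) - phiF m (((j : ℤ) - 1) * s))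
        * (phiF m ((j : ℤ) * t) - phiF m (((j : ℤ) - 1) * t))
      = 8 * Real.sin (Real.pi * (s : ℤ) / (2 * m + 1)) * Real.sin (Real.pi * (t : ℤ) / (2 * m + 1))
        * (Real.cos ((2 * j - 1) * (Real.pi * (s - t : ℤ) / (2 * m + 1)))
          - Real.cos ((2 * j - 1) * (Real.pi * (s + t : ℤ) / (2 * m + 1)))) := by
    intro j
    rw [aux_phi_sub, aux_phi_sub]
    have h1 : (2 * (j : ℝ) - 1) * (Real.pi * (s - t : ℤ) / (2 * m + 1))
      = (2 * (j : ℝ) - 1) * (Real.pi * (s : ℤ) / (2 * m + 1))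
        - (2 * (j : ℝ) - 1) * (Real.pi * (t : ℤ) / (2 * m + 1)) := by
      push_cast; ring
    have h2 : (2 * (j : ℝ) - 1) * (Real.pi * (s + t : ℤ) / (2 * m + 1))
      = (2 * (j : ℝ) - 1) * (Real.pi * (s : ℤ) / (2 * m + 1))
        + (2 * (j : ℝ) - 1) * (Real.pi * (t : ℤ) / (2 * m + 1)) := by
      push_cast; ring
    rw [h1, h2, Real.cos_add, Real.cos_sub, Int.cast_natCast j]
    ring
  rw [Finset.sum_congr rfl fun j _ => key j, ← Finset.mul_sum, Finset.sum_sub_distrib]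
  rw [aux_D m (s + t) (by omega) (by rw [abs_lt]; omega)]
  split_ifs with h
  · subst h
    rw [aux_mu, Even.neg_one_zpow ⟨(s : ℤ), rfl⟩]
    simp
    ring
  · rw [aux_D m (s - t) (by omega) (by rw [abs_lt]; omega)]
    have : ((-1 : ℝ)) ^ ((s : ℤ) + t) = (-1) ^ ((s : ℤ) - t) := by
      have h3 : (s : ℤ) + t = (s - t) + (t + t) := by ring
      rw [h3, zpow_add₀ (by norm_num), Even.neg_one_zpow (n := (t : ℤ) + t) ⟨(t : ℤ), rfl⟩, mul_one]
    rw [this]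
    ring

theorem aux_mu_ne (m t : ℕ) (ht : t ∈ Finset.Icc 1 m) : muF m t ≠ 0 := by
  rw [Finset.mem_Icc] at ht
  rw [aux_mu]
  have := aux_sin_ne m t (by omega) (by rw [abs_lt]; omega)
  exact mul_ne_zero (by norm_num) (pow_ne_zero 2 this)

theorem stmt_15 (m : ℕ) (hm : 0 < m) (r : ℤ) :
    (∑ j ∈ Finset.Icc 1 m, (Fcal m r j) ^ 2
        = -(2 * m + 1 : ℝ) * ∑ t ∈ Finset.Icc 1 m, (muF m t) ^ (1 - 2 * r)) ∧
    (-(2 * m + 1 : ℝ) * ∑ t ∈ Finset.Icc 1 m, (muF m t) ^ (1 - 2 * r)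
        = -(2 * m + 1 : ℝ) * Fcal m (2 * r) 1) ∧
    (4 * (∑ t ∈ Finset.Icc 1 m, (muF m t) ^ (1 - r)) ^ 2
        + 2 * ∑ j ∈ Finset.Icc 1 m, (Gcal m r j) ^ 2
      = 2 * (2 * m + 1 : ℝ) * ∑ t ∈ Finset.Icc 1 m, (muF m t) ^ (2 - 2 * r)) := by
  refine ⟨?_, ?_, ?_⟩
  · unfold Fcal
    rw [aux_quad _ (fun t => muF m t ^ (-r)) (fun t => -(2 * m + 1 : ℝ) * muF m t) 0
      (fun j t => phiF m ((j : ℤ) * t) - phiF m (((j : ℤ) - 1) * t))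
      (fun s hs t ht => aux_orth_F m s t hs ht), zero_mul, add_zero, Finset.mul_sum]
    refine Finset.sum_congr rfl fun t ht => ?_
    have h0 := aux_mu_ne m t ht
    have : (1 - 2 * r) = -r + -r + 1 := by ring
    rw [this, zpow_add₀ h0, zpow_add₀ h0, zpow_one]
    ring
  · unfold Fcal
    congr 1
    refine Finset.sum_congr rfl fun t ht => ?_
    have h0 := aux_mu_ne m t ht
    have : (1 - 2 * r) = -(2 * r) + 1 := by ring
    rw [this, zpow_add₀ h0, zpow_one]
    simp [muF, phiF]
  · have hG : ∀ j : ℕ, Gcal m r j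
        = ∑ t ∈ Finset.Icc 1 m, muF m t ^ (1 - r) * phiF m ((j : ℤ) * t) := by
      intro j
      unfold Gcal
      refine Finset.sum_congr rfl fun t ht => ?_
      have h0 := aux_mu_ne m t ht
      have : (1 - r) = -r + 1 := by ring
      rw [aux_phi_second, this, zpow_add₀ h0, zpow_one]
      ring
    simp_rw [hG]
    rw [aux_quad _ (fun t => muF m t ^ (1 - r)) (fun _ => (2 * m + 1 : ℝ)) (-2)
      (fun j t => phiF m ((j : ℤ) * t)) (fun s hs t ht => aux_orth_G m s t hs ht)]
    have h2 : ∀ t ∈ Finset.Icc 1 m, muF m t ^ (2 - 2 * r) = (muF m t ^ (1 - r)) ^ 2 := by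
      intro t ht
      have h0 := aux_mu_ne m t ht
      have : (2 - 2 * r) = (1 - r) + (1 - r) := by ring
      rw [this, zpow_add₀ h0]
      ring
    rw [Finset.sum_congr rfl h2, ← Finset.sum_mul]
    ring
end
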